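/- If ξ₁ and η are independent random variables, ξ₁ is not Gaussian (and not degenerate), then ξ₁ + η does not have a standard normal distribution. -/

import Mathlib

open MeasureTheory ProbabilityTheory Filter

/-- A nowhere vanishing entire function has an entire logarithm. -/
lemma exists_differentiable_exp_eq {f : ℂ → ℂ} (hf : Differentiable ℂ f) (hf0 : ∀ z, f z ≠ 0) :
    ∃ g : ℂ → ℂ, Differentiable ℂ g ∧ ∀ z, Complex.exp (g z) = f z := by
  have hsc : IsSimplyConnected (Set.univ : Set ℂ) :=
    (Homeomorph.Set.univ ℂ).toHomotopyEquiv.simplyConnectedSpace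
  obtain ⟨g, hgc, hg⟩ := Complex.exists_continuousOn_eqOn_exp_comp hsc isOpen_univ
    hf.continuous.continuousOn (by simpa using hf0)
  have hg' : ∀ z, Complex.exp (g z) = f z := fun z ↦ hg (Set.mem_univ z)
  have hgc' : Continuous g := by simpa using hgc
  refine ⟨g, fun a ↦ ?_, hg'⟩
  have hclose : ∀ᶠ z in nhds a, g z = g a + Complex.log (f z / f a) := by
    have : ∀ᶠ z in nhds a, ‖g z - g a‖ < Real.pi := by
      have hc : Continuous fun z ↦ ‖g z - g a‖ := by fun_prop
      exact hc.continuousAt.eventually_lt continuousAt_const (by simpa using Real.pi_pos)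
    filter_upwards [this] with z hz
    have him := abs_lt.mp ((Complex.abs_im_le_norm (g z - g a)).trans_lt hz)
    rw [← hg' z, ← hg' a, ← Complex.exp_sub, Complex.log_exp him.1 him.2.le]
    ring
  refine DifferentiableAt.congr_of_eventuallyEq ?_ hclose
  refine ((hf a).div_const _).clog ?_ |>.const_add _
  simp [hf0 a, Complex.slitPlane]

/-- An entire function whose real part grows at most quadratically is a polynomial of degree at
most two. -/
lemma eq_quadratic_of_re_le {g : ℂ → ℂ} (hg : Differentiable ℂ g) {C : ℝ} (hC : 0 < C)
    (hre : ∀ z, (g z).re ≤ C * (1 + ‖z‖ ^ 2)) :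
    ∃ a b c : ℂ, ∀ z, g z = a + b * z + c * z ^ 2 := by
  have hbound : ∀ R : ℝ, 1 ≤ R → ∀ z ∈ Metric.sphere (0 : ℂ) R,
      ‖g z‖ ≤ (20 * C + 3 * ‖g 0‖) * R ^ 2 := by
    intro R hR z hz
    have hzR : ‖z‖ = R := by simpa using hz
    have key := Complex.borelCaratheodory (f := g) (R := 2 * R) (z := z)
      (M := C * (1 + 4 * R ^ 2)) (by positivity) hg.differentiableOn
      (fun w hw ↦ by
        have hw' : ‖w‖ < 2 * R := by simpa using hw
        refine (hre w).trans ?_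
        have := pow_le_pow_left₀ (norm_nonneg w) hw'.le 2
        gcongr
        linarith)
      (by positivity) (by simp only [mem_ball_zero_iff]; linarith)
    rw [hzR, show 2 * R - R = R by ring, show 2 * R + R = 3 * R by ring,
      mul_div_assoc, div_self (by positivity), mul_div_assoc, mul_div_assoc,
      div_self (by positivity)] at key
    nlinarith [norm_nonneg (g 0), mul_nonneg hC.le (show 0 ≤ R ^ 2 - 1 by nlinarith),
      mul_nonneg (norm_nonneg (g 0)) (show 0 ≤ R ^ 2 - 1 by nlinarith)]
  have hderiv : ∀ n, 3 ≤ n → iteratedDeriv n g 0 = 0 := by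
    intro n hn
    rw [← norm_le_zero_iff]
    have hlim : Tendsto (fun R : ℝ ↦ n.factorial * (20 * C + 3 * ‖g 0‖) * R⁻¹) atTop (nhds 0) := by
      simpa using tendsto_inv_atTop_zero.const_mul ((n.factorial : ℝ) * (20 * C + 3 * ‖g 0‖))
    refine ge_of_tendsto hlim ?_
    filter_upwards [eventually_ge_atTop 1] with R hR
    have hR0 : 0 < R := by linarith
    refine (Complex.norm_iteratedDeriv_le_of_forall_mem_sphere_norm_le n hR0
      hg.diffContOnCl (hbound R hR)).trans ?_
    rw [div_le_iff₀ (by positivity)]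
    have : R ^ 3 ≤ R ^ n := pow_le_pow_right₀ hR hn
    calc (n.factorial : ℝ) * ((20 * C + 3 * ‖g 0‖) * R ^ 2)
        = n.factorial * (20 * C + 3 * ‖g 0‖) * R⁻¹ * R ^ 3 := by field_simp
      _ ≤ _ := by gcongr
  refine ⟨g 0, iteratedDeriv 1 g 0, 2⁻¹ * iteratedDeriv 2 g 0, fun z ↦ ?_⟩
  rw [← Complex.taylorSeries_eq_of_entire' 0 z hg, tsum_eq_sum (s := Finset.range 3)
    (fun n hn ↦ by simp [hderiv n (by simpa using hn)])]
  simp [Finset.sum_range_succ]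

/-- If the sum of two independent real random variables has all exponential moments, then so does
the first one. -/
lemma ProbabilityTheory.IndepFun.integrable_exp_mul_left_of_add {Ω : Type*} [MeasurableSpace Ω]
    {μ : Measure Ω} [NeZero μ] {X Y : Ω → ℝ} (hX : Measurable X) (hY : Measurable Y)
    (h : IndepFun X Y μ) {t : ℝ} (hint : Integrable (fun ω ↦ Real.exp (t * (X + Y) ω)) μ) :
    Integrable (fun ω ↦ Real.exp (t * X ω)) μ := by
  refine (h.exp_mul t t).integrable_left_of_integrable_op (· * ·) 1 one_ne_zero
    (fun x y ↦ by simp [enorm_mul]) ?_ (by fun_prop) (by fun_prop) ?_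
  · simpa [mul_add, Real.exp_add] using hint
  · intro h0
    obtain ⟨ω, hω⟩ := h0.exists
    exact (Real.exp_pos _).ne' hω

/-- Jensen's inequality for the moment generating function. -/
lemma exp_mul_integral_le_mgf {Ω : Type*} [MeasurableSpace Ω] {μ : Measure Ω}
    [IsProbabilityMeasure μ] {X : Ω → ℝ} (hX : Integrable X μ) {t : ℝ}
    (hint : Integrable (fun ω ↦ Real.exp (t * X ω)) μ) :
    Real.exp (t * ∫ ω, X ω ∂μ) ≤ mgf X μ t := by
  rw [← integral_const_mul]
  exact convexOn_exp.map_integral_le Real.continuous_exp.continuousOn isClosed_univ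
    (by simp) (hX.const_mul t) hint

/-- **Cramér's decomposition theorem** for the standard Gaussian law. -/
theorem exists_map_eq_gaussianReal_of_map_add_eq {Ω : Type*} [MeasurableSpace Ω] {μ : Measure Ω}
    [IsProbabilityMeasure μ] {X Y : Ω → ℝ} (hX : Measurable X) (hY : Measurable Y)
    (hindep : IndepFun X Y μ) (hsum : μ.map (X + Y) = gaussianReal 0 1) :
    ∃ (m : ℝ) (v : NNReal), μ.map X = gaussianReal m v := by
  have hint : ∀ t, Integrable (fun ω ↦ Real.exp (t * (X + Y) ω)) μ := fun t ↦ by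
    rw [← mgf_pos_iff, mgf_gaussianReal hsum]
    exact Real.exp_pos _
  have hintX : ∀ t, Integrable (fun ω ↦ Real.exp (t * X ω)) μ := fun t ↦
    hindep.integrable_exp_mul_left_of_add hX hY (hint t)
  have hintY : ∀ t, Integrable (fun ω ↦ Real.exp (t * Y ω)) μ := fun t ↦
    hindep.symm.integrable_exp_mul_left_of_add hY hX (by rw [add_comm]; exact hint t)
  have hsetX : integrableExpSet X μ = Set.univ := Set.eq_univ_of_forall hintX
  have hsetY : integrableExpSet Y μ = Set.univ := Set.eq_univ_of_forall hintY
  have hX1 : Integrable X μ := integrable_of_mem_interior_integrableExpSet (by simp [hsetX])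
  have hY1 : Integrable Y μ := integrable_of_mem_interior_integrableExpSet (by simp [hsetY])
  have hdiff : Differentiable ℂ (complexMGF X μ) := by
    simpa [hsetX, differentiableOn_univ] using differentiableOn_complexMGF (X := X) (μ := μ)
  have hne : ∀ z, complexMGF X μ z ≠ 0 := by
    intro z hz
    have hmul : complexMGF (X + Y) μ z = complexMGF X μ z * complexMGF Y μ z := by
      have hc : Measurable fun x : ℝ ↦ Complex.exp (z * x) := by fun_prop
      simp only [complexMGF, Pi.add_apply, Complex.ofReal_add, mul_add, Complex.exp_add]
      exact (hindep.comp hc hc).integral_mul_eq_mul_integral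
        (hc.comp hX).aestronglyMeasurable (hc.comp hY).aestronglyMeasurable
    rw [complexMGF_gaussianReal hsum, hz, zero_mul] at hmul
    exact Complex.exp_ne_zero _ hmul
  set n := ∫ ω, Y ω ∂μ
  have hle : ∀ t, mgf X μ t ≤ Real.exp (t ^ 2 / 2 - t * n) := by
    intro t
    have hmul := hindep.mgf_add' (t := t) hX.aestronglyMeasurable hY.aestronglyMeasurable
    rw [mgf_gaussianReal hsum] at hmul
    rw [Real.exp_sub, le_div_iff₀ (Real.exp_pos _)]
    calc mgf X μ t * Real.exp (t * n) ≤ mgf X μ t * mgf Y μ t := by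
          gcongr
          · exact mgf_nonneg
          · exact exp_mul_integral_le_mgf hY1 (hintY t)
      _ = Real.exp (t ^ 2 / 2) := by rw [← hmul]; simp
  obtain ⟨g, hg, hexp⟩ := exists_differentiable_exp_eq hdiff hne
  obtain ⟨a, b, c, hquad⟩ := eq_quadratic_of_re_le hg (C := 1 + |n|) (by positivity) fun z ↦ by
    have h1 : Real.exp (g z).re ≤ Real.exp (z.re ^ 2 / 2 - z.re * n) := by
      rw [← Complex.norm_exp, hexp]
      exact norm_complexMGF_le_mgf.trans (hle _)
    rw [Real.exp_le_exp] at h1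
    have h2 := Complex.abs_re_le_norm z
    have h3 : z.re ^ 2 ≤ ‖z‖ ^ 2 := sq_le_sq' (abs_le.mp h2).1 (abs_le.mp h2).2
    have h4 : -(z.re * n) ≤ ‖z‖ * |n| :=
      (neg_le_abs _).trans (by rw [abs_mul]; gcongr)
    have h5 : ‖z‖ * |n| ≤ (1 + ‖z‖ ^ 2) * |n| := by
      gcongr
      nlinarith [sq_nonneg (‖z‖ - 1), sq_nonneg ‖z‖]
    nlinarith [sq_nonneg ‖z‖]
  have hmgf : ∀ t, mgf X μ t = Real.exp (a.re + b.re * t + c.re * t ^ 2) := by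
    intro t
    have h1 : ‖complexMGF X μ t‖ = mgf X μ t := by
      rw [complexMGF_ofReal, Complex.norm_real, Real.norm_of_nonneg mgf_nonneg]
    rw [← h1, ← hexp, Complex.norm_exp, hquad]
    simp [← Complex.ofReal_pow]
  have ha : a.re = 0 := by
    rw [← Real.exp_eq_one_iff]
    simpa using (hmgf 0).symm
  have hc : 0 ≤ c.re := by
    have hge : ∀ t, t * ∫ ω, X ω ∂μ ≤ a.re + b.re * t + c.re * t ^ 2 := fun t ↦ by
      rw [← Real.exp_le_exp, ← hmgf]
      exact exp_mul_integral_le_mgf hX1 (hintX t)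
    linarith [hge 1, hge (-1)]
  obtain ⟨v, hv⟩ : ∃ v : NNReal, (v : ℝ) = 2 * c.re :=
    ⟨(2 * c.re).toNNReal, Real.coe_toNNReal _ (by positivity)⟩
  refine ⟨b.re, v, ?_⟩
  have hext : mgf X μ = mgf id (gaussianReal b.re v) := by
    rw [mgf_id_gaussianReal]
    ext t
    rw [hmgf, ha, hv]
    ring_nf
  have hcomplex := eqOn_complexMGF_of_mgf hext
  simp only [hsetX, interior_univ, Set.mem_univ, Set.ofPred_true, Set.eqOn_univ] at hcomplex
  simpa using Measure.ext_of_complexMGF_eq hX.aemeasurable aemeasurable_id hcomplex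

theorem sum_not_std_normal_of_not_gaussian {Ω : Type*} [MeasurableSpace Ω] (μ : Measure Ω)
    [IsProbabilityMeasure μ] (ξ η : Ω → ℝ) (hξ : Measurable ξ) (hη : Measurable η)
    (hindep : IndepFun ξ η μ)
    (hnotgauss : ¬ ∃ (m : ℝ) (v : NNReal), μ.map ξ = gaussianReal m v) :
    μ.map (ξ + η) ≠ gaussianReal 0 1 :=
  fun h ↦ hnotgauss (exists_map_eq_gaussianReal_of_map_add_eq hξ hη hindep h)
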